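/- arXiv:1309.2459 — 4 statements merged into one kernel-verified Lean document; each statement's English description precedes it below -/
import Mathlib

section
/- Let Ω ⊆ ℝ² be open, let f : Ω → ℝ be C², and set B := 1 − f_x² − f_y². If f satisfies the zero mean curvature equation (1 − f_y²) f_xx + 2 f_x f_y f_xy + (1 − f_x²) f_yy = 0 at a point p ∈ Ω, then at p the identity f_x B_x + f_y B_y = 2 B (f_xx + f_yy) holds; in particular, if additionally B(p) = 0, then the gradients ∇f(p) and ∇B(p) are orthogonal. -/
/-! Differentiating `B` and using the symmetry of the second derivative gives
`f_x B_x + f_y B_y = -2 (f_x² f_xx + 2 f_x f_y f_xy + f_y² f_yy)`, whether or not `f` solves the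
equation. The difference between this and `2 B (f_xx + f_yy)` is `-2` times the left-hand side of
the zero mean curvature equation. -/

open Set

/-- Partial derivative in the first (x) direction. -/
noncomputable def pd1 {E : Type*} [NormedAddCommGroup E] [NormedSpace ℝ E]
    (f : ℝ × ℝ → E) (q : ℝ × ℝ) : E := fderiv ℝ f q (1, 0)

/-- Partial derivative in the second (y) direction. -/
noncomputable def pd2 {E : Type*} [NormedAddCommGroup E] [NormedSpace ℝ E]
    (f : ℝ × ℝ → E) (q : ℝ × ℝ) : E := fderiv ℝ f q (0, 1)

/-- B = 1 - f_x^2 - f_y^2. -/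
noncomputable def Bfun (f : ℝ × ℝ → ℝ) (q : ℝ × ℝ) : ℝ :=
  1 - (pd1 f q) ^ 2 - (pd2 f q) ^ 2

/-- The zero mean curvature equation at a point. -/
def ZMCAt (f : ℝ × ℝ → ℝ) (q : ℝ × ℝ) : Prop :=
  (1 - (pd2 f q) ^ 2) * pd1 (pd1 f) q
    + 2 * pd1 f q * pd2 f q * pd2 (pd1 f) q
    + (1 - (pd1 f q) ^ 2) * pd2 (pd2 f) q = 0

open scoped Topology

section SecondDerivative

variable {𝕜 : Type*} [NontriviallyNormedField 𝕜] {E : Type*} [NormedAddCommGroup E]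
  [NormedSpace 𝕜 E] {F : Type*} [NormedAddCommGroup F] [NormedSpace 𝕜 F] {f : E → F} {p : E}

lemma hasFDerivAt_fderiv_apply (hf' : DifferentiableAt 𝕜 (fderiv 𝕜 f) p) (v : E) :
    HasFDerivAt (fun q => fderiv 𝕜 f q v) ((fderiv 𝕜 (fderiv 𝕜 f) p).flip v) p :=
  (ContinuousLinearMap.apply 𝕜 F v).hasFDerivAt.comp p hf'.hasFDerivAt

lemma fderiv_fderiv_apply_comm [IsRCLikeNormedField 𝕜]
    (hf : ∀ᶠ q in 𝓝 p, DifferentiableAt 𝕜 f q) (hf' : DifferentiableAt 𝕜 (fderiv 𝕜 f) p)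
    (v w : E) :
    fderiv 𝕜 (fun q => fderiv 𝕜 f q w) p v = fderiv 𝕜 (fun q => fderiv 𝕜 f q v) p w :=
  calc fderiv 𝕜 (fun q => fderiv 𝕜 f q w) p v
      = fderiv 𝕜 (fderiv 𝕜 f) p v w := by
        rw [(hasFDerivAt_fderiv_apply hf' w).fderiv, ContinuousLinearMap.flip_apply]
    _ = fderiv 𝕜 (fderiv 𝕜 f) p w v :=
        second_derivative_symmetric_of_eventually (hf.mono fun _ hq => hq.hasFDerivAt)
          hf'.hasFDerivAt v w
    _ = fderiv 𝕜 (fun q => fderiv 𝕜 f q v) p w := by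
        rw [(hasFDerivAt_fderiv_apply hf' v).fderiv, ContinuousLinearMap.flip_apply]

end SecondDerivative

lemma pd1_pd2_comm {E : Type*} [NormedAddCommGroup E] [NormedSpace ℝ E] {f : ℝ × ℝ → E}
    {p : ℝ × ℝ} (hf : ∀ᶠ q in 𝓝 p, DifferentiableAt ℝ f q)
    (hf' : DifferentiableAt ℝ (fderiv ℝ f) p) : pd1 (pd2 f) p = pd2 (pd1 f) p :=
  fderiv_fderiv_apply_comm hf hf' (1, 0) (0, 1)

/-- The left-hand side of the zero mean curvature equation, so that `ZMCAt f q` unfolds to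
`zmcOperator f q = 0`. The mixed derivative `f_xy` is encoded as `pd2 (pd1 f)`. -/
noncomputable def zmcOperator (f : ℝ × ℝ → ℝ) (q : ℝ × ℝ) : ℝ :=
  (1 - (pd2 f q) ^ 2) * pd1 (pd1 f) q
    + 2 * pd1 f q * pd2 f q * pd2 (pd1 f) q
    + (1 - (pd1 f q) ^ 2) * pd2 (pd2 f) q

section ZeroMeanCurvature

variable {f : ℝ × ℝ → ℝ} {p : ℝ × ℝ}

lemma fderiv_Bfun_apply (h1 : DifferentiableAt ℝ (pd1 f) p) (h2 : DifferentiableAt ℝ (pd2 f) p)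
    (v : ℝ × ℝ) :
    fderiv ℝ (Bfun f) p v
      = -2 * (pd1 f p * fderiv ℝ (pd1 f) p v + pd2 f p * fderiv ℝ (pd2 f) p v) := by
  have hB : HasFDerivAt (Bfun f) _ p :=
    ((h1.hasFDerivAt.pow 2).const_sub 1).sub (h2.hasFDerivAt.pow 2)
  rw [hB.fderiv]
  simp only [Nat.add_one_sub_one, pow_one, nsmul_eq_mul, Nat.cast_ofNat, sub_apply, neg_apply,
    smul_apply, smul_eq_mul]
  ring

lemma pd1_Bfun (h1 : DifferentiableAt ℝ (pd1 f) p) (h2 : DifferentiableAt ℝ (pd2 f) p) :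
    pd1 (Bfun f) p = -2 * (pd1 f p * pd1 (pd1 f) p + pd2 f p * pd1 (pd2 f) p) :=
  fderiv_Bfun_apply h1 h2 (1, 0)

lemma pd2_Bfun (h1 : DifferentiableAt ℝ (pd1 f) p) (h2 : DifferentiableAt ℝ (pd2 f) p) :
    pd2 (Bfun f) p = -2 * (pd1 f p * pd2 (pd1 f) p + pd2 f p * pd2 (pd2 f) p) :=
  fderiv_Bfun_apply h1 h2 (0, 1)

lemma pd1_mul_pd1_Bfun_add_pd2_mul_pd2_Bfun (hf : ∀ᶠ q in 𝓝 p, DifferentiableAt ℝ f q)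
    (hf' : DifferentiableAt ℝ (fderiv ℝ f) p) :
    pd1 f p * pd1 (Bfun f) p + pd2 f p * pd2 (Bfun f) p
      = 2 * Bfun f p * (pd1 (pd1 f) p + pd2 (pd2 f) p) - 2 * zmcOperator f p := by
  have h1 : DifferentiableAt ℝ (pd1 f) p := (hasFDerivAt_fderiv_apply hf' (1, 0)).differentiableAt
  have h2 : DifferentiableAt ℝ (pd2 f) p := (hasFDerivAt_fderiv_apply hf' (0, 1)).differentiableAt
  rw [pd1_Bfun h1 h2, pd2_Bfun h1 h2, pd1_pd2_comm hf hf', Bfun, zmcOperator]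
  ring

end ZeroMeanCurvature

theorem stmt1_general {f : ℝ × ℝ → ℝ} {p : ℝ × ℝ} (hf : ∀ᶠ q in 𝓝 p, DifferentiableAt ℝ f q)
    (hf' : DifferentiableAt ℝ (fderiv ℝ f) p) (hzmc : ZMCAt f p) :
    pd1 f p * pd1 (Bfun f) p + pd2 f p * pd2 (Bfun f) p
      = 2 * Bfun f p * (pd1 (pd1 f) p + pd2 (pd2 f) p) ∧
    (Bfun f p = 0 →
      pd1 f p * pd1 (Bfun f) p + pd2 f p * pd2 (Bfun f) p = 0) := by
  have hop : zmcOperator f p = 0 := hzmc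
  have hgrad : pd1 f p * pd1 (Bfun f) p + pd2 f p * pd2 (Bfun f) p
      = 2 * Bfun f p * (pd1 (pd1 f) p + pd2 (pd2 f) p) := by
    rw [pd1_mul_pd1_Bfun_add_pd2_mul_pd2_Bfun hf hf', hop, mul_zero, sub_zero]
  exact ⟨hgrad, fun hB => by rw [hgrad, hB, mul_zero, zero_mul]⟩

/-- at a point where the ZMC equation holds,
    f_x B_x + f_y B_y = 2 B (f_xx + f_yy); in particular if B(p) = 0 then
    ∇f(p) and ∇B(p) are orthogonal. -/
theorem stmt1 (Ω : Set (ℝ × ℝ)) (hΩ : IsOpen Ω) (f : ℝ × ℝ → ℝ)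
    (hf : ContDiffOn ℝ 2 f Ω) (p : ℝ × ℝ) (hp : p ∈ Ω) (hzmc : ZMCAt f p) :
    pd1 f p * pd1 (Bfun f) p + pd2 f p * pd2 (Bfun f) p
      = 2 * Bfun f p * (pd1 (pd1 f) p + pd2 (pd2 f) p) ∧
    (Bfun f p = 0 →
      pd1 f p * pd1 (Bfun f) p + pd2 f p * pd2 (Bfun f) p = 0) := by
  have hfp : ContDiffAt ℝ 2 f p := hf.contDiffAt (hΩ.mem_nhds hp)
  exact stmt1_general ((hfp.eventually (by simp)).mono fun _ hq => hq.differentiableAt two_ne_zero)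
    ((hfp.fderiv_right (m := 1) one_add_one_eq_two.le).differentiableAt one_ne_zero) hzmc
end

section
/- Let U ⊆ ℂ be a connected open set whose intersection with ℝ contains a nonempty open interval I, and let γ_ℂ : U → ℂ³ be holomorphic such that γ_ℂ(t) ∈ ℝ³ for all t ∈ I and such that γ := γ_ℂ|_I is a null curve in ℝ³₁ (⟨γ', γ'⟩ = 0, γ' ≠ 0 on I) which is non-degenerate at u₀ ∈ I (γ''(u₀) is not a scalar multiple of γ'(u₀)). Define φ(u + iv) := Re γ_ℂ(u + iv). Then there exists ε > 0 such that for all (u, v) with |u − u₀| < ε and 0 < |v| < ε, one has ⟨φ_u(u,v), φ_u(u,v)⟩ > 0; together with the conformality identities ⟨φ_u,φ_u⟩ = ⟨φ_v,φ_v⟩ and ⟨φ_u,φ_v⟩ = 0, this means the induced metric of φ is positive definite there, so φ is a space-like (maximal) surface for v ≠ 0 near the curve. -/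
/-!
Write `F = γ'`. By the Cauchy–Riemann equations `φ_u = Re F` and `φ_v = -Im F`, and the
complex-bilinear extension of the inner product makes `⟨F, F⟩` holomorphic. As `⟨F, F⟩` vanishes on
the real axis, it vanishes near `u₀`; its real and imaginary parts are the conformality identities,
and in particular `⟨φ_u, φ_u⟩ = ⟨Im F, Im F⟩`.

Since `F` is real on the real axis, `Im F(u + iv) = Im (F(u + iv) - F(u)) = v (γ''(u₀) + o(1))`, so
`⟨φ_u, φ_u⟩ = v² (⟨γ''(u₀), γ''(u₀)⟩ + o(1))`. Finally `γ''(u₀)` is orthogonal to the nonzero null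
vector `γ'(u₀)` and not a multiple of it, which in a Lorentzian space forces it to be space-like.
-/

open Set

/-- The Lorentz inner product of ℝ³₁. -/
def lprod (a b : ℝ × ℝ × ℝ) : ℝ :=
  -(a.1 * b.1) + a.2.1 * b.2.1 + a.2.2 * b.2.2

/-- A vector of ℂ³ is real if all three components have vanishing imaginary part. -/
def isRealVec (w : ℂ × ℂ × ℂ) : Prop := w.1.im = 0 ∧ w.2.1.im = 0 ∧ w.2.2.im = 0

/-- Componentwise real part ℂ³ → ℝ³. -/
def reVec (w : ℂ × ℂ × ℂ) : ℝ × ℝ × ℝ := (w.1.re, w.2.1.re, w.2.2.re)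

/-- φ(u,v) = Re γ_ℂ(u+iv). -/
noncomputable def phiOf (γC : ℂ → ℂ × ℂ × ℂ) (q : ℝ × ℝ) : ℝ × ℝ × ℝ :=
  reVec (γC ((q.1 : ℂ) + q.2 * Complex.I))

open Filter Topology Complex

section Lorentzian

/-- A Lorentzian inner product: a symmetric bilinear form with a time-like vector `e` on whose
orthogonal complement the form is positive definite. No dimension is prescribed. -/
structure IsLorentzian {V : Type*} [AddCommGroup V] [Module ℝ V]
    (B : LinearMap.BilinForm ℝ V) : Prop where
  isSymm : B.IsSymm
  exists_timelike : ∃ e, B e e < 0 ∧ ∀ x, B e x = 0 → x ≠ 0 → 0 < B x x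

lemma IsLorentzian.pos_of_orthogonal_null {V : Type*} [AddCommGroup V] [Module ℝ V]
    {B : LinearMap.BilinForm ℝ V} (hB : IsLorentzian B) {p q : V} (hp : p ≠ 0) (hpp : B p p = 0)
    (hpq : B p q = 0) (hq : ¬ ∃ c : ℝ, q = c • p) : 0 < B q q := by
  obtain ⟨e, -, hpos⟩ := hB.exists_timelike
  have hep : B e p ≠ 0 := fun h => (hpos p h hp).ne' hpp
  set c := B e q / B e p
  have horth : B e (q - c • p) = 0 := by
    simp only [map_sub, map_smul, smul_eq_mul]
    rw [div_mul_cancel₀ _ hep, sub_self]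
  have hne : q - c • p ≠ 0 := fun h => hq ⟨c, sub_eq_zero.1 h⟩
  have hqp : B q p = 0 := (hB.isSymm.eq p q).symm.trans hpq
  calc 0 < B (q - c • p) (q - c • p) := hpos _ horth hne
    _ = B q q := by simp [hpp, hpq, hqp]

variable {V : Type*} [NormedAddCommGroup V] [NormedSpace ℝ V] {B : V →L[ℝ] V →L[ℝ] ℝ}
  {g : ℝ → V} {g' : V} {t : ℝ}

lemma apply_hasDerivAt_eq_zero_of_eventually_null (hB : B.toBilinForm.IsSymm)
    (hg : HasDerivAt g g' t) (hnull : ∀ᶠ s in 𝓝 t, B (g s) (g s) = 0) : B (g t) g' = 0 := by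
  have hderiv : HasDerivAt (fun s => B (g s) (g s)) (B (g t) g' + B g' (g t)) t :=
    B.hasDerivAt_of_bilinear (fun _ => hg) (fun _ => hg)
  have hzero : B (g t) g' + B g' (g t) = 0 :=
    hderiv.unique ((hasDerivAt_const t 0).congr_of_eventuallyEq hnull)
  have hsymm : B g' (g t) = B (g t) g' := hB.eq g' (g t)
  linarith

lemma IsLorentzian.pos_of_hasDerivAt_of_eventually_null (hB : IsLorentzian B.toBilinForm)
    (hg : HasDerivAt g g' t) (hnull : ∀ᶠ s in 𝓝 t, B (g s) (g s) = 0) (hne : g t ≠ 0)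
    (hnd : ¬ ∃ c : ℝ, g' = c • g t) : 0 < B g' g' :=
  hB.pos_of_orthogonal_null hne hnull.self_of_nhds
    (apply_hasDerivAt_eq_zero_of_eventually_null hB.isSymm hg hnull) hnd

end Lorentzian

lemma eventually_eq_zero_of_eventually_ofReal {E : Type*} [NormedAddCommGroup E] [NormedSpace ℂ E]
    {f : ℂ → E} {u₀ : ℝ} (hf : AnalyticAt ℂ f u₀) (hzero : ∀ᶠ t : ℝ in 𝓝 u₀, f t = 0) :
    ∀ᶠ z in 𝓝 (u₀ : ℂ), f z = 0 := by
  have hlim : Tendsto ofReal (𝓝[≠] u₀) (𝓝[≠] (u₀ : ℂ)) :=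
    continuous_ofReal.continuousAt.continuousWithinAt.tendsto_nhdsWithin
      fun t ht => ofReal_injective.ne ht
  exact hf.frequently_zero_iff_eventually_zero.1
    (hlim.frequently (hzero.filter_mono nhdsWithin_le_nhds).frequently)

lemma tendsto_add_mul_I (u₀ : ℝ) :
    Tendsto (fun q : ℝ × ℝ => (q.1 + q.2 * I : ℂ)) (𝓝 (u₀, 0)) (𝓝 (u₀ : ℂ)) := by
  have hcont : Continuous fun q : ℝ × ℝ => (q.1 + q.2 * I : ℂ) := by fun_prop
  simpa using hcont.tendsto (u₀, 0)

section RealPart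

variable {E V : Type*} [NormedAddCommGroup E] [NormedSpace ℝ E] [NormedSpace ℂ E]
  [IsScalarTower ℝ ℂ E] [NormedAddCommGroup V] [NormedSpace ℝ V]
  (B : V →L[ℝ] V →L[ℝ] ℝ) (R : E →L[ℝ] V) {f : ℂ → E} {f' : E} {u₀ : ℝ}

/-- The imaginary part that belongs to a real-linear "real part" `R`, after the model
`Im w = -Re (i w)`. -/
noncomputable def imPart : E →L[ℝ] V := -(R ∘L ContinuousLinearMap.lsmul ℝ ℂ I)

lemma imPart_apply (w : E) : imPart R w = -R (I • w) := rfl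

lemma imPart_I_smul (w : E) : imPart R (I • w) = R w := by
  simp [imPart_apply, smul_smul]

lemma apply_I_smul (w : E) : R (I • w) = -imPart R w := by
  rw [imPart_apply, neg_neg]

/-- The surface `(u, v) ↦ Re f(u + iv)`, with `R` in the role of the real part; `phiOf` is the
case of the componentwise real part on `ℂ³`. -/
noncomputable def rePartSurface (f : ℂ → E) (q : ℝ × ℝ) : V := R (f (q.1 + q.2 * I))

/-- The complex-bilinear extension of `B`, where `w` stands for `R w + i (imPart R w)`. At
`w = w' = deriv f z` it is the coefficient of the Hopf differential of `rePartSurface R f`. -/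
noncomputable def complexForm (w w' : E) : ℂ :=
  ↑(B (R w) (R w') - B (imPart R w) (imPart R w')) +
    ↑(B (R w) (imPart R w') + B (imPart R w) (R w')) * I

variable {B R}

lemma complexForm_I_smul_left (w w' : E) :
    complexForm B R (I • w) w' = I * complexForm B R w w' := by
  simp only [complexForm, imPart_I_smul, apply_I_smul R, map_neg, neg_apply, ofReal_add,
    ofReal_sub, ofReal_neg]
  linear_combination (-(B (R w) (imPart R w') + B (imPart R w) (R w')) : ℂ) * I_sq

lemma complexForm_I_smul_right (w w' : E) :
    complexForm B R w (I • w') = I * complexForm B R w w' := by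
  simp only [complexForm, imPart_I_smul, apply_I_smul R, map_neg, ofReal_add, ofReal_sub,
    ofReal_neg]
  linear_combination (-(B (R w) (imPart R w') + B (imPart R w) (R w')) : ℂ) * I_sq

lemma complexForm_self_eq_zero_iff (hB : B.toBilinForm.IsSymm) {w : E} :
    complexForm B R w w = 0 ↔
      B (R w) (R w) = B (imPart R w) (imPart R w) ∧ B (R w) (imPart R w) = 0 := by
  have hsymm : B (imPart R w) (R w) = B (R w) (imPart R w) := hB.eq (imPart R w) (R w)
  simp [complexForm, Complex.ext_iff, sub_eq_zero, hsymm]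

lemma differentiableAt_complexForm_self {z : ℂ} (hf : DifferentiableAt ℂ f z) :
    DifferentiableAt ℂ (fun z => complexForm B R (f z) (f z)) z := by
  have hf' := hf.hasDerivAt.hasFDerivAt.restrictScalars ℝ
  have hR := R.hasFDerivAt.comp z hf'
  have hI := (imPart R).hasFDerivAt.comp z hf'
  have hre := (B.hasFDerivAt_of_bilinear hR hR).sub (B.hasFDerivAt_of_bilinear hI hI)
  have him := (B.hasFDerivAt_of_bilinear hR hI).add (B.hasFDerivAt_of_bilinear hI hR)
  have hform : HasFDerivAt (𝕜 := ℝ) (fun z => complexForm B R (f z) (f z)) _ z :=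
    (ofRealCLM.hasFDerivAt.comp z hre).add ((ofRealCLM.hasFDerivAt.comp z him).mul_const I)
  have hleibniz (h : ℂ) : fderiv ℝ (fun z => complexForm B R (f z) (f z)) z h =
      complexForm B R (f z) (h • deriv f z) + complexForm B R (h • deriv f z) (f z) := by
    rw [hform.fderiv]
    simp only [complexForm, add_apply, sub_apply, smul_apply, smul_eq_mul, ofReal_add, ofReal_sub,
      ofRealCLM_apply, Function.comp_apply, ContinuousLinearMap.comp_apply,
      ContinuousLinearMap.precompR_apply, ContinuousLinearMap.precompL_apply,
      ContinuousLinearMap.compL_apply, ContinuousLinearMap.coe_restrictScalars',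
      ContinuousLinearMap.toSpanSingleton_apply]
    ring
  refine differentiableAt_complex_iff_differentiableAt_real.2 ⟨hform.differentiableAt, ?_⟩
  rw [hleibniz, hleibniz, complexForm_I_smul_left, complexForm_I_smul_right, one_smul, smul_add,
    smul_eq_mul, smul_eq_mul]

lemma hasFDerivAt_rePartSurface {q : ℝ × ℝ} (hf : HasDerivAt f f' (q.1 + q.2 * I)) :
    HasFDerivAt (rePartSurface R f)
      (R ∘L (equivRealProdCLM.symm : ℝ × ℝ →L[ℝ] ℂ).smulRight f') q := by
  rw [← equivRealProdCLM_symm_apply] at hf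
  have hcomp := R.hasFDerivAt.comp q
    ((hf.hasFDerivAt.restrictScalars ℝ).comp q equivRealProdCLM.symm.hasFDerivAt)
  exact hcomp.congr_of_eventuallyEq (.of_forall fun p => by
    simp [rePartSurface, equivRealProdCLM_symm_apply])

lemma pd1_rePartSurface {q : ℝ × ℝ} (hf : HasDerivAt f f' (q.1 + q.2 * I)) :
    pd1 (rePartSurface R f) q = R f' := by
  simp [pd1, (hasFDerivAt_rePartSurface hf).fderiv, equivRealProdCLM_symm_apply]

lemma pd2_rePartSurface {q : ℝ × ℝ} (hf : HasDerivAt f f' (q.1 + q.2 * I)) :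
    pd2 (rePartSurface R f) q = -imPart R f' := by
  simp [pd2, (hasFDerivAt_rePartSurface hf).fderiv, equivRealProdCLM_symm_apply, imPart_apply]

variable (L : E →L[ℝ] V)

lemma hasDerivAt_apply_comp_ofReal {t : ℝ} (hf : HasDerivAt f f' (t : ℂ)) :
    HasDerivAt (fun s : ℝ => L (f s)) (L f') t := by
  have hcomp : HasDerivAt (fun s : ℝ => f s) ((1 : ℂ) • f') t :=
    hf.scomp t ofRealCLM.hasDerivAt
  rw [one_smul] at hcomp
  exact L.hasFDerivAt.comp_hasDerivAt t hcomp

lemma deriv_apply_comp_ofReal_eventuallyEq [CompleteSpace E] (hf : AnalyticAt ℂ f (u₀ : ℂ)) :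
    deriv (fun s : ℝ => L (f s)) =ᶠ[𝓝 u₀] fun t => L (deriv f t) := by
  filter_upwards [continuous_ofReal.continuousAt.eventually hf.eventually_analyticAt] with t ht
  exact (hasDerivAt_apply_comp_ofReal L ht.differentiableAt.hasDerivAt).deriv

variable {L}

lemma eventually_apply_deriv_eq_zero [CompleteSpace E] (hf : AnalyticAt ℂ f (u₀ : ℂ))
    (hzero : ∀ᶠ t : ℝ in 𝓝 u₀, L (f t) = 0) : ∀ᶠ t : ℝ in 𝓝 u₀, L (deriv f t) = 0 := by
  have hconst : deriv (fun s : ℝ => L (f s)) =ᶠ[𝓝 u₀] deriv fun _ => (0 : V) :=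
    EventuallyEq.deriv hzero
  filter_upwards [deriv_apply_comp_ofReal_eventuallyEq L hf, hconst] with t ht ht0
  rw [← ht, ht0, deriv_const]

lemma tendsto_inv_smul_of_eventually_ofReal_eq_zero (hf : HasStrictDerivAt f f' (u₀ : ℂ))
    (hzero : ∀ᶠ t : ℝ in 𝓝 u₀, L (f t) = 0) :
    Tendsto (fun q : ℝ × ℝ => q.2⁻¹ • L (f (q.1 + q.2 * I))) (𝓝[{q | q.2 ≠ 0}] (u₀, 0))
      (𝓝 (L (I • f'))) := by
  have hfst : Tendsto Prod.fst (𝓝 (u₀, (0 : ℝ))) (𝓝 u₀) := continuous_fst.tendsto _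
  have hpair : Tendsto (fun q : ℝ × ℝ => ((q.1 + q.2 * I : ℂ), (q.1 : ℂ))) (𝓝 (u₀, 0))
      (𝓝 ((u₀ : ℂ), (u₀ : ℂ))) :=
    (tendsto_add_mul_I u₀).prodMk_nhds ((continuous_ofReal.tendsto u₀).comp hfst)
  have hstrict := (L.isBigO_comp _ _).trans_isLittleO
    (hf.hasStrictFDerivAt.isLittleO.comp_tendsto hpair)
  have hlittle : (fun q : ℝ × ℝ => L (f (q.1 + q.2 * I)) - q.2 • L (I • f'))
      =o[𝓝 (u₀, 0)] fun q => q.2 := by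
    refine (hstrict.congr' ?_ .rfl).trans_isBigO
      (.of_bound 1 (.of_forall fun q => by simp))
    filter_upwards [hfst.eventually hzero] with q hq
    have hsmul : (q.2 * I : ℂ) • f' = q.2 • I • f' := by
      rw [mul_smul, ← coe_algebraMap, algebraMap_smul]
    simp [hq, hsmul]
  have hquot : Tendsto (fun q : ℝ × ℝ => q.2⁻¹ • (L (f (q.1 + q.2 * I)) - q.2 • L (I • f'))
      + L (I • f')) (𝓝 (u₀, 0)) (𝓝 (L (I • f'))) := by
    simpa using hlittle.tendsto_inv_smul_nhds_zero.add_const (L (I • f'))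
  refine (hquot.mono_left nhdsWithin_le_nhds).congr' ?_
  filter_upwards [self_mem_nhdsWithin] with q hq
  rw [smul_sub, inv_smul_smul₀ hq, sub_add_cancel]

lemma eventually_apply_pos_of_eventually_ofReal_eq_zero (hf : HasStrictDerivAt f f' (u₀ : ℂ))
    (hzero : ∀ᶠ t : ℝ in 𝓝 u₀, L (f t) = 0) (hpos : 0 < B (L (I • f')) (L (I • f'))) :
    ∀ᶠ q : ℝ × ℝ in 𝓝[{q | q.2 ≠ 0}] (u₀, 0),
      0 < B (L (f (q.1 + q.2 * I))) (L (f (q.1 + q.2 * I))) := by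
  have hB : Continuous fun x => B x x := by fun_prop
  have hlim := (hB.tendsto _).comp (tendsto_inv_smul_of_eventually_ofReal_eq_zero hf hzero)
  filter_upwards [hlim.eventually (lt_mem_nhds hpos)] with q hq
  simp only [Function.comp_apply, map_smul, smul_apply, smul_eq_mul, ← mul_assoc] at hq
  exact pos_of_mul_pos_right hq (mul_self_nonneg _)

lemma eventually_complexForm_self_eq_zero [CompleteSpace E] (hB : B.toBilinForm.IsSymm)
    (hf : AnalyticAt ℂ f (u₀ : ℂ)) (hreal : ∀ᶠ t : ℝ in 𝓝 u₀, imPart R (f t) = 0)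
    (hnull : ∀ᶠ t : ℝ in 𝓝 u₀, B (R (f t)) (R (f t)) = 0) :
    ∀ᶠ z in 𝓝 (u₀ : ℂ), complexForm B R (f z) (f z) = 0 := by
  have hanalytic : AnalyticAt ℂ (fun z => complexForm B R (f z) (f z)) u₀ :=
    analyticAt_iff_eventually_differentiableAt.2 (hf.eventually_analyticAt.mono fun z hz =>
      differentiableAt_complexForm_self hz.differentiableAt)
  refine eventually_eq_zero_of_eventually_ofReal hanalytic ?_
  filter_upwards [hreal, hnull] with t ht htnull
  simp [complexForm_self_eq_zero_iff hB, ht, htnull]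

lemma conformal_rePartSurface (hB : B.toBilinForm.IsSymm) {q : ℝ × ℝ}
    (hf : HasDerivAt f f' (q.1 + q.2 * I)) (hsq : complexForm B R f' f' = 0) :
    B (pd1 (rePartSurface R f) q) (pd1 (rePartSurface R f) q)
        = B (pd2 (rePartSurface R f) q) (pd2 (rePartSurface R f) q) ∧
      B (pd1 (rePartSurface R f) q) (pd2 (rePartSurface R f) q) = 0 := by
  simpa [pd1_rePartSurface hf, pd2_rePartSurface hf] using (complexForm_self_eq_zero_iff hB).1 hsq

end RealPart

section Minkowski

/-- The inner product `lprod` of `ℝ³₁` as a continuous bilinear form. -/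
noncomputable def lprodCLM : (ℝ × ℝ × ℝ) →L[ℝ] (ℝ × ℝ × ℝ) →L[ℝ] ℝ :=
  (LinearMap.mk₂ ℝ lprod
    (fun _ _ _ => by simp only [lprod, Prod.fst_add, Prod.snd_add]; ring)
    (fun _ _ _ => by simp only [lprod, Prod.smul_fst, Prod.smul_snd, smul_eq_mul]; ring)
    (fun _ _ _ => by simp only [lprod, Prod.fst_add, Prod.snd_add]; ring)
    (fun _ _ _ => by simp only [lprod, Prod.smul_fst, Prod.smul_snd, smul_eq_mul]; ring)
    ).toContinuousBilinearMap

lemma lprodCLM_apply (p q : ℝ × ℝ × ℝ) : lprodCLM p q = lprod p q := rfl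

lemma isLorentzian_lprodCLM : IsLorentzian lprodCLM.toBilinForm where
  isSymm := ⟨fun p q => by
    simp only [ContinuousLinearMap.toBilinForm_apply, lprodCLM_apply, lprod]
    ring⟩
  exists_timelike := by
    refine ⟨(1, 0, 0), by simp [lprodCLM_apply, lprod], ?_⟩
    rintro ⟨t, x, y⟩ horth hne
    obtain rfl : t = 0 := by simpa [lprodCLM_apply, lprod] using horth
    have hxy : x ≠ 0 ∨ y ≠ 0 := by simpa [Prod.ext_iff, imp_iff_not_or] using hne
    have hpos : 0 < x * x + y * y := by
      rcases hxy with hx | hy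
      · exact add_pos_of_pos_of_nonneg (mul_self_pos.2 hx) (mul_self_nonneg y)
      · exact add_pos_of_nonneg_of_pos (mul_self_nonneg x) (mul_self_pos.2 hy)
    simpa [lprodCLM_apply, lprod] using hpos

/-- `reVec` as a continuous real-linear map. -/
noncomputable def reVecCLM : ℂ × ℂ × ℂ →L[ℝ] ℝ × ℝ × ℝ := reCLM.prodMap (reCLM.prodMap reCLM)

lemma imPart_reVecCLM_eq_zero_iff {w : ℂ × ℂ × ℂ} : imPart reVecCLM w = 0 ↔ isRealVec w := by
  simp [imPart_apply, reVecCLM, isRealVec, Prod.ext_iff]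

end Minkowski

theorem stmt7_general {E V : Type*} [NormedAddCommGroup E] [NormedSpace ℝ E] [NormedSpace ℂ E]
    [IsScalarTower ℝ ℂ E] [CompleteSpace E] [NormedAddCommGroup V] [NormedSpace ℝ V]
    {B : V →L[ℝ] V →L[ℝ] ℝ} (hB : IsLorentzian B.toBilinForm) (R : E →L[ℝ] V)
    {U : Set ℂ} {γ : ℂ → E} {u₀ : ℝ} (hU : U ∈ 𝓝 (u₀ : ℂ)) (hγ : DifferentiableOn ℂ γ U)
    (hreal : ∀ᶠ t : ℝ in 𝓝 u₀, imPart R (γ t) = 0)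
    (hnull : ∀ᶠ t : ℝ in 𝓝 u₀,
      B (deriv (fun s : ℝ => R (γ s)) t) (deriv (fun s : ℝ => R (γ s)) t) = 0)
    (hreg : deriv (fun s : ℝ => R (γ s)) u₀ ≠ 0)
    (hnd : ¬ ∃ c : ℝ,
      deriv (deriv fun s : ℝ => R (γ s)) u₀ = c • deriv (fun s : ℝ => R (γ s)) u₀) :
    ∃ ε > 0, ∀ u v : ℝ, |u - u₀| < ε → 0 < |v| → |v| < ε →
      (u + v * I : ℂ) ∈ U ∧
      0 < B (pd1 (rePartSurface R γ) (u, v)) (pd1 (rePartSurface R γ) (u, v)) ∧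
      B (pd1 (rePartSurface R γ) (u, v)) (pd1 (rePartSurface R γ) (u, v))
        = B (pd2 (rePartSurface R γ) (u, v)) (pd2 (rePartSurface R γ) (u, v)) ∧
      B (pd1 (rePartSurface R γ) (u, v)) (pd2 (rePartSurface R γ) (u, v)) = 0 := by
  have hγan : AnalyticAt ℂ γ u₀ := hγ.analyticAt hU
  have hvel := deriv_apply_comp_ofReal_eventuallyEq R hγan
  have hacc := hasDerivAt_apply_comp_ofReal R hγan.deriv.differentiableAt.hasDerivAt
  have hFreal := eventually_apply_deriv_eq_zero hγan hreal
  have hFnull : ∀ᶠ t : ℝ in 𝓝 u₀, B (R (deriv γ t)) (R (deriv γ t)) = 0 := by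
    filter_upwards [hvel, hnull] with t ht htnull
    rwa [ht] at htnull
  rw [hvel.deriv_eq, hacc.deriv, hvel.self_of_nhds] at hnd
  rw [hvel.self_of_nhds] at hreg
  have haccpos := hB.pos_of_hasDerivAt_of_eventually_null hacc hFnull hreg hnd
  have hpos := eventually_apply_pos_of_eventually_ofReal_eq_zero (B := B)
    hγan.deriv.hasStrictDerivAt hFreal (by rwa [imPart_I_smul])
  have hnear := (tendsto_add_mul_I u₀).eventually
    ((eventually_mem_set.2 hU).and (hγan.eventually_analyticAt.and
      (eventually_complexForm_self_eq_zero hB.isSymm hγan.deriv hFreal hFnull)))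
  obtain ⟨ε, hε, hball⟩ :=
    Metric.eventually_nhds_iff.1 ((eventually_nhdsWithin_iff.1 hpos).and hnear)
  refine ⟨ε, hε, fun u v hu hv0 hv => ?_⟩
  have hdist : dist (u, v) (u₀, 0) < ε := by
    simpa [Prod.dist_eq, Real.dist_eq] using ⟨hu, hv⟩
  obtain ⟨himpos, hmem, han, hsq⟩ := hball hdist
  have hD := han.differentiableAt.hasDerivAt
  refine ⟨hmem, ?_, conformal_rePartSurface hB.isSymm hD hsq⟩
  rw [pd1_rePartSurface hD, ((complexForm_self_eq_zero_iff hB.isSymm).1 hsq).1]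
  exact himpos (abs_pos.1 hv0)

/-- near a point where the real null curve γ = γ_ℂ|ℝ is non-degenerate,
    the surface φ = Re γ_ℂ is space-like for 0 < |v| small: ⟨φ_u, φ_u⟩ > 0, and together
    with the conformality identities its induced metric is positive definite there. -/
theorem stmt7 (U : Set ℂ) (hU : IsOpen U) (hconn : IsPreconnected U)
    (a b : ℝ) (hab : a < b) (hsub : ∀ t ∈ Ioo a b, (t : ℂ) ∈ U)
    (γC : ℂ → ℂ × ℂ × ℂ) (hγC : DifferentiableOn ℂ γC U)
    (hreal : ∀ t ∈ Ioo a b, isRealVec (γC (t : ℂ)))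
    (hnull : ∀ t ∈ Ioo a b,
      lprod (deriv (fun s : ℝ => reVec (γC (s : ℂ))) t)
            (deriv (fun s : ℝ => reVec (γC (s : ℂ))) t) = 0)
    (hreg : ∀ t ∈ Ioo a b, deriv (fun s : ℝ => reVec (γC (s : ℂ))) t ≠ 0)
    (u₀ : ℝ) (hu₀ : u₀ ∈ Ioo a b)
    (hnd : ¬ ∃ c : ℝ,
      deriv (deriv (fun s : ℝ => reVec (γC (s : ℂ)))) u₀
        = c • deriv (fun s : ℝ => reVec (γC (s : ℂ))) u₀) :
    ∃ ε > 0, ∀ u v : ℝ, |u - u₀| < ε → 0 < |v| → |v| < ε →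
      ((u : ℂ) + v * Complex.I) ∈ U ∧
      0 < lprod (pd1 (phiOf γC) (u, v)) (pd1 (phiOf γC) (u, v)) ∧
      lprod (pd1 (phiOf γC) (u, v)) (pd1 (phiOf γC) (u, v))
        = lprod (pd2 (phiOf γC) (u, v)) (pd2 (phiOf γC) (u, v)) ∧
      lprod (pd1 (phiOf γC) (u, v)) (pd2 (phiOf γC) (u, v)) = 0 := by
  have hI : Ioo a b ∈ 𝓝 u₀ := Ioo_mem_nhds hu₀.1 hu₀.2
  exact stmt7_general isLorentzian_lprodCLM reVecCLM (hU.mem_nhds (hsub u₀ hu₀)) hγC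
    (mem_of_superset hI fun t ht => imPart_reVecCLM_eq_zero_iff.2 (hreal t ht))
    (mem_of_superset hI fun t ht => hnull t ht) (hreg u₀ hu₀) hnd
end

section
/- The function f : ℝ² → ℝ, f(x, y) = log(cosh y) − log(cosh x), satisfies the zero mean curvature equation (1 − f_y²) f_xx + 2 f_x f_y f_xy + (1 − f_x²) f_yy = 0 on all of ℝ². Moreover, with B := 1 − f_x² − f_y² = 1 − tanh²x − tanh²y, every point (x, y) with B(x, y) = 0 is a non-degenerate point of type change, i.e. ∇B(x, y) ≠ 0 there. -/
/-!
The graph of `f11` is a translation surface `t = u x + v y` with `u = -log ∘ cosh` and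
`v = log ∘ cosh`. As `f_xy = 0` on such a surface, the zero mean curvature equation reduces to
`(1 - v'²) u'' + (1 - u'²) v'' = 0`, and here `u'' = -(1 - u'²)` and `v'' = 1 - v'²` because `tanh`
solves `w' = 1 - w²`.

On a translation surface `∇B = (-2 u' u'', -2 v' v'')`. Where neither `u''` nor `v''` vanishes, a
zero of `∇B` is thus a zero of both `u'` and `v'`, and there `B = 1 - u'² - v'²` equals `1`.
-/

open Set

/-- The entire zero mean curvature graph S₀ : f(x,y) = log(cosh y) − log(cosh x). -/
noncomputable def f11 : ℝ × ℝ → ℝ :=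
  fun q => Real.log (Real.cosh q.2) - Real.log (Real.cosh q.1)

/-- The function `(x, y) ↦ u x + v y`, whose graph is a translation surface. Its first partial
derivatives and `B` are again of this form, so one computation of partial derivatives serves for
all of them. -/
def translationFun {E : Type*} [Add E] (u v : ℝ → E) (p : ℝ × ℝ) : E :=
  u p.1 + v p.2

section PartialDerivatives

variable {E : Type*} [NormedAddCommGroup E] [NormedSpace ℝ E]

lemma hasFDerivAt_translationFun {u v : ℝ → E} {u' v' : E} {q : ℝ × ℝ}
    (hu : HasDerivAt u u' q.1) (hv : HasDerivAt v v' q.2) :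
    HasFDerivAt (translationFun u v)
      (.toSpanSingleton ℝ u' ∘L .fst ℝ ℝ ℝ + .toSpanSingleton ℝ v' ∘L .snd ℝ ℝ ℝ) q :=
  (hu.hasFDerivAt.comp q hasFDerivAt_fst).add (hv.hasFDerivAt.comp q hasFDerivAt_snd)

lemma pd1_translationFun_apply {u v : ℝ → E} {u' v' : E} {q : ℝ × ℝ}
    (hu : HasDerivAt u u' q.1) (hv : HasDerivAt v v' q.2) :
    pd1 (translationFun u v) q = u' := by
  simp [pd1, (hasFDerivAt_translationFun hu hv).fderiv]

lemma pd2_translationFun_apply {u v : ℝ → E} {u' v' : E} {q : ℝ × ℝ}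
    (hu : HasDerivAt u u' q.1) (hv : HasDerivAt v v' q.2) :
    pd2 (translationFun u v) q = v' := by
  simp [pd2, (hasFDerivAt_translationFun hu hv).fderiv]

variable {u v u' v' : ℝ → E}

lemma pd1_translationFun (hu : ∀ x, HasDerivAt u (u' x) x) (hv : ∀ y, HasDerivAt v (v' y) y) :
    pd1 (translationFun u v) = translationFun u' 0 := by
  funext q
  simp [pd1_translationFun_apply (hu q.1) (hv q.2), translationFun]

lemma pd2_translationFun (hu : ∀ x, HasDerivAt u (u' x) x) (hv : ∀ y, HasDerivAt v (v' y) y) :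
    pd2 (translationFun u v) = translationFun 0 v' := by
  funext q
  simp [pd2_translationFun_apply (hu q.1) (hv q.2), translationFun]

end PartialDerivatives

section TranslationSurface

variable {u v u' v' : ℝ → ℝ} {u'' v'' : ℝ} {q : ℝ × ℝ}

lemma zmcAt_translationFun_iff
    (hu : ∀ x, HasDerivAt u (u' x) x) (hv : ∀ y, HasDerivAt v (v' y) y)
    (hu' : HasDerivAt u' u'' q.1) (hv' : HasDerivAt v' v'' q.2) :
    ZMCAt (translationFun u v) q ↔ (1 - v' q.2 ^ 2) * u'' + (1 - u' q.1 ^ 2) * v'' = 0 := by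
  have hxx : pd1 (translationFun u' 0) q = u'' := pd1_translationFun_apply hu' (hasDerivAt_zero _)
  have hxy : pd2 (translationFun u' 0) q = 0 := pd2_translationFun_apply hu' (hasDerivAt_zero _)
  have hyy : pd2 (translationFun 0 v') q = v'' := pd2_translationFun_apply (hasDerivAt_zero _) hv'
  rw [ZMCAt, pd1_translationFun hu hv, pd2_translationFun hu hv, hxx, hxy, hyy]
  simp [translationFun]

lemma Bfun_translationFun
    (hu : ∀ x, HasDerivAt u (u' x) x) (hv : ∀ y, HasDerivAt v (v' y) y) :
    Bfun (translationFun u v) = translationFun (fun x ↦ 1 - u' x ^ 2) (fun y ↦ -v' y ^ 2) := by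
  funext q
  simp [Bfun, pd1_translationFun hu hv, pd2_translationFun hu hv, translationFun, sub_eq_add_neg]

lemma grad_Bfun_translationFun
    (hu : ∀ x, HasDerivAt u (u' x) x) (hv : ∀ y, HasDerivAt v (v' y) y)
    (hu' : HasDerivAt u' u'' q.1) (hv' : HasDerivAt v' v'' q.2) :
    (pd1 (Bfun (translationFun u v)) q, pd2 (Bfun (translationFun u v)) q) =
      (-(2 * u' q.1 * u''), -(2 * v' q.2 * v'')) := by
  have hx : HasDerivAt (fun x ↦ 1 - u' x ^ 2) (-(2 * u' q.1 * u'')) q.1 := by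
    simpa using (hu'.fun_pow 2).const_sub 1
  have hy : HasDerivAt (fun y ↦ -v' y ^ 2) (-(2 * v' q.2 * v'')) q.2 := by
    simpa using (hv'.fun_pow 2).fun_neg
  rw [Bfun_translationFun hu hv, pd1_translationFun_apply hx hy, pd2_translationFun_apply hx hy]

lemma grad_Bfun_translationFun_ne_zero
    (hu : ∀ x, HasDerivAt u (u' x) x) (hv : ∀ y, HasDerivAt v (v' y) y)
    (hu' : HasDerivAt u' u'' q.1) (hv' : HasDerivAt v' v'' q.2) (hu'' : u'' ≠ 0) (hv'' : v'' ≠ 0)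
    (hB : Bfun (translationFun u v) q = 0) :
    (pd1 (Bfun (translationFun u v)) q, pd2 (Bfun (translationFun u v)) q) ≠ (0, 0) := by
  rw [grad_Bfun_translationFun hu hv hu' hv']
  intro hgrad
  obtain ⟨hu₀, hv₀⟩ : u' q.1 = 0 ∧ v' q.2 = 0 := by simpa [hu'', hv''] using hgrad
  simp [Bfun_translationFun hu hv, translationFun, hu₀, hv₀] at hB

end TranslationSurface

lemma hasDerivAt_log_cosh (x : ℝ) :
    HasDerivAt (fun x ↦ Real.log (Real.cosh x)) (Real.tanh x) x := by
  rw [Real.tanh_eq_sinh_div_cosh]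
  exact (Real.hasDerivAt_cosh x).log (Real.cosh_pos x).ne'

lemma hasDerivAt_neg_log_cosh (x : ℝ) :
    HasDerivAt (fun x ↦ -Real.log (Real.cosh x)) (-Real.tanh x) x :=
  (hasDerivAt_log_cosh x).fun_neg

lemma hasDerivAt_tanh (x : ℝ) : HasDerivAt Real.tanh (1 - Real.tanh x ^ 2) x := by
  have hcosh : Real.cosh x ≠ 0 := (Real.cosh_pos x).ne'
  have hquot := (Real.hasDerivAt_sinh x).fun_div (Real.hasDerivAt_cosh x) hcosh
  simp only [← Real.tanh_eq_sinh_div_cosh] at hquot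
  refine hquot.congr_deriv ?_
  rw [Real.tanh_eq_sinh_div_cosh]
  field_simp

lemma f11_eq_translationFun :
    f11 = translationFun (fun x ↦ -Real.log (Real.cosh x)) (fun y ↦ Real.log (Real.cosh y)) := by
  funext q
  exact sub_eq_neg_add _ _

/-- f(x,y) = log(cosh y) − log(cosh x) satisfies the ZMC equation everywhere;
    B = 1 − tanh²x − tanh²y; and every point with B = 0 is a non-degenerate point of
    type change (∇B ≠ 0). -/
theorem stmt11 :
    (∀ q : ℝ × ℝ, ZMCAt f11 q) ∧
    (∀ q : ℝ × ℝ, Bfun f11 q = 1 - (Real.tanh q.1) ^ 2 - (Real.tanh q.2) ^ 2) ∧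
    (∀ q : ℝ × ℝ, Bfun f11 q = 0 → (pd1 (Bfun f11) q, pd2 (Bfun f11) q) ≠ (0, 0)) := by
  have hu := hasDerivAt_neg_log_cosh
  have hv := hasDerivAt_log_cosh
  have hu' (x : ℝ) := (hasDerivAt_tanh x).fun_neg
  have hv' := hasDerivAt_tanh
  have hne (x : ℝ) : 1 - Real.tanh x ^ 2 ≠ 0 := (sub_pos.2 (Real.tanh_sq_lt_one x)).ne'
  rw [f11_eq_translationFun]
  refine ⟨fun q ↦ ?_, fun q ↦ ?_, fun q ↦ ?_⟩
  · rw [zmcAt_translationFun_iff hu hv (hu' q.1) (hv' q.2)]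
    ring
  · rw [Bfun_translationFun hu hv, translationFun]
    ring
  · exact grad_Bfun_translationFun_ne_zero hu hv (hu' q.1) (hv' q.2)
      (neg_ne_zero.2 (hne q.1)) (hne q.2)
end

section
/- Let c ∈ ℝ, c ≠ 0, let εsign ∈ {+1, −1}, and define F : ℝ³ → ℝ by F(t, x, y) = 12(x² − t²) − εsign·(x + t)⁴ + 12 y². Then F(−c, c, 0) = 0 and ∂F/∂t(−c, c, 0) = 24c ≠ 0, so by the implicit function theorem there exist a neighborhood W of (c, 0) in ℝ² and a C^∞ function τ : W → ℝ with τ(c, 0) = −c and F(τ(x, y), x, y) = 0 on W. Moreover, any such C² function τ satisfies ∂τ/∂y(c, 0) = 0 and ∂²τ/∂y²(c, 0) = −1/c ≠ 0. -/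
open Set

/-!
The `t`-derivative of `F` at `(-c, c, 0)` is `24 c ≠ 0`, so the implicit function theorem gives the
graph. It is applied in the class `C^ω`, where regularity at a point spreads to a neighbourhood; at
order `∞` the neighbourhood could shrink with the order.

On the line `x = c` the equation separates: with `Φ t = F (t, c, 0)` and `g y = τ (c, y)` it reads
`Φ (g y) = -12 y ^ 2`. The right side is critical at `y = 0`, hence so is `g`. The term `Φ'' g' ^ 2`
of the second-order chain rule then vanishes, which leaves `24 c * g'' 0 = -24`.
-/

open Filter Topology
open scoped ContDiff

section PartialDerivative

variable {E : Type*} [NormedAddCommGroup E] [NormedSpace ℝ E] {f : ℝ × ℝ → E} {a b : ℝ}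

lemma hasDerivAt_pd2 (hf : DifferentiableAt ℝ f (a, b)) :
    HasDerivAt (fun y => f (a, y)) (pd2 f (a, b)) b :=
  hf.hasFDerivAt.comp_hasDerivAt b ((hasDerivAt_const b a).prodMk (hasDerivAt_id b))

lemma differentiableAt_pd2 {q : ℝ × ℝ} (hf : ContDiffAt ℝ 2 f q) :
    DifferentiableAt ℝ (pd2 f) q :=
  ((hf.fderiv_right (m := 1) (by norm_num)).differentiableAt one_ne_zero).clm_apply
    (differentiableAt_const _)

lemma pd2_pd2_eq_iteratedDeriv_two (hf : ContDiffAt ℝ 2 f (a, b)) :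
    pd2 (pd2 f) (a, b) = iteratedDeriv 2 (fun y => f (a, y)) b := by
  have hline : Tendsto (fun y => (a, y)) (𝓝 b) (𝓝 (a, b)) :=
    (Continuous.prodMk_right a).tendsto b
  have hderiv : deriv (fun y => f (a, y)) =ᶠ[𝓝 b] fun y => pd2 f (a, y) := by
    filter_upwards [hline.eventually (hf.eventually (by simp))] with y hy
    exact (hasDerivAt_pd2 (hy.differentiableAt two_ne_zero)).deriv
  rw [iteratedDeriv_succ, iteratedDeriv_one, hderiv.deriv_eq]
  exact (hasDerivAt_pd2 (differentiableAt_pd2 hf)).deriv.symm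

end PartialDerivative

section SeparatedEquation

variable {𝕜 : Type*} [NontriviallyNormedField 𝕜] {Φ g ψ : 𝕜 → 𝕜} {x : 𝕜}

lemma deriv_eq_div_of_comp_eventuallyEq (hΦ : deriv Φ (g x) ≠ 0) (hg : DifferentiableAt 𝕜 g x)
    (h : Φ ∘ g =ᶠ[𝓝 x] ψ) : deriv g x = deriv ψ x / deriv Φ (g x) := by
  rw [eq_div_iff hΦ, ← h.deriv_eq, deriv_comp x (differentiableAt_of_deriv_ne_zero hΦ) hg, mul_comm]

lemma iteratedDeriv_two_eq_div_of_comp_eventuallyEq (hΦ : ContDiffAt 𝕜 2 Φ (g x))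
    (hΦ' : deriv Φ (g x) ≠ 0) (hg : ContDiffAt 𝕜 2 g x) (h : Φ ∘ g =ᶠ[𝓝 x] ψ)
    (hg' : deriv g x = 0) :
    iteratedDeriv 2 g x = iteratedDeriv 2 ψ x / deriv Φ (g x) := by
  rw [eq_div_iff hΦ', ← h.iteratedDeriv_eq 2, iteratedDeriv_comp_two hΦ hg, hg']
  ring

end SeparatedEquation

lemma exists_isOpen_contDiffOn_implicit {𝕜 E : Type*} [RCLike 𝕜] [NormedAddCommGroup E]
    [NormedSpace 𝕜 E] [CompleteSpace E] {n : ℕ∞ω} {f : E × 𝕜 → 𝕜} {a : E} {b : 𝕜}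
    (hf : ContDiffAt 𝕜 n f (a, b)) (hn : n ≠ 0) (hn' : n ≠ ∞)
    (hd : deriv (fun t => f (a, t)) b ≠ 0) :
    ∃ W : Set E, IsOpen W ∧ a ∈ W ∧
      ∃ τ : E → 𝕜, ContDiffOn 𝕜 n τ W ∧ τ a = b ∧ ∀ q ∈ W, f (q, τ q) = f (a, b) := by
  have hpartial : HasDerivAt (fun t => f (a, t)) (fderiv 𝕜 f (a, b) (0, 1)) b :=
    (hf.differentiableAt hn).hasFDerivAt.comp_hasDerivAt b
      ((hasDerivAt_const b a).prodMk (hasDerivAt_id b))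
  have hinv : (fderiv 𝕜 f (a, b) ∘L .inr 𝕜 E 𝕜).IsInvertible := by
    refine ⟨.unitsEquivAut 𝕜 (Units.mk0 _ hd), ?_⟩
    ext
    simp [hpartial.deriv]
  obtain ⟨W, hW, hWo, haW⟩ := eventually_nhds_iff.1
    ((hf.eventually_apply_implicitFunction hn hinv).and
      ((hf.contDiffAt_implicitFunction hn hinv).eventually hn'))
  exact ⟨W, hWo, haW, hf.implicitFunction hn hinv,
    fun q hq => (hW q hq).2.contDiffWithinAt, hf.implicitFunction_apply_self hn hinv,
    fun q hq => (hW q hq).1⟩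

/-- The function whose zero set is the completed parabolic catenoid, space-like for `s = 1` and
time-like for `s = -1`. The time coordinate `t` comes first. -/
def parabolicCatenoidFun (s t x y : ℝ) : ℝ :=
  12 * (x ^ 2 - t ^ 2) - s * (x + t) ^ 4 + 12 * y ^ 2

namespace parabolicCatenoidFun

variable {c : ℝ} (s : ℝ)

lemma apply_neg_self_zero (c : ℝ) : parabolicCatenoidFun s (-c) c 0 = 0 := by
  simp [parabolicCatenoidFun]

lemma contDiff_uncurry {n : ℕ∞ω} :
    ContDiff ℝ n fun p : (ℝ × ℝ) × ℝ => parabolicCatenoidFun s p.2 p.1.1 p.1.2 := by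
  unfold parabolicCatenoidFun
  fun_prop

lemma hasDerivAt_time (t x y : ℝ) :
    HasDerivAt (fun t => parabolicCatenoidFun s t x y) (-24 * t - 4 * s * (x + t) ^ 3) t := by
  have hid := hasDerivAt_id' t
  convert! ((((hid.pow 2).const_sub (x ^ 2)).const_mul 12).sub
    (((hid.const_add x).pow 4).const_mul s)).add_const (12 * y ^ 2) using 1
  norm_num
  ring

lemma deriv_time_neg_self (c : ℝ) :
    deriv (fun t => parabolicCatenoidFun s t c 0) (-c) = 24 * c := by
  simp [(hasDerivAt_time s (-c) c 0).deriv]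

lemma exists_contDiffOn_graph (hc : c ≠ 0) :
    ∃ W : Set (ℝ × ℝ), IsOpen W ∧ (c, 0) ∈ W ∧
      ∃ τ : ℝ × ℝ → ℝ, ContDiffOn ℝ ω τ W ∧ τ (c, 0) = -c ∧
        ∀ q ∈ W, parabolicCatenoidFun s (τ q) q.1 q.2 = 0 := by
  simpa only [apply_neg_self_zero] using
    exists_isOpen_contDiffOn_implicit (a := (c, 0)) (b := -c) (contDiff_uncurry s).contDiffAt
      (n := ω) (by simp) (by simp) (by simpa [deriv_time_neg_self] using hc)

lemma pd2_eq_zero_and_pd2_pd2_eq (hc : c ≠ 0) {τ : ℝ × ℝ → ℝ} (hτ : ContDiffAt ℝ 2 τ (c, 0))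
    (hτc : τ (c, 0) = -c) (hgraph : ∀ᶠ q in 𝓝 (c, 0), parabolicCatenoidFun s (τ q) q.1 q.2 = 0) :
    pd2 τ (c, 0) = 0 ∧ pd2 (pd2 τ) (c, 0) = -1 / c := by
  set Φ : ℝ → ℝ := fun t => parabolicCatenoidFun s t c 0
  set g : ℝ → ℝ := fun y => τ (c, y)
  have hΦ : ContDiff ℝ 2 Φ :=
    (contDiff_uncurry s).comp (contDiff_prodMk_right ((c, 0) : ℝ × ℝ))
  have hg : ContDiffAt ℝ 2 g 0 := hτ.comp 0 (contDiff_prodMk_right c).contDiffAt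
  have hΦ' : deriv Φ (g 0) = 24 * c := by rw [← deriv_time_neg_self s c, ← hτc]
  have hΦ'_ne : deriv Φ (g 0) ≠ 0 := by simpa [hΦ'] using hc
  have hsep : Φ ∘ g =ᶠ[𝓝 0] fun y => -12 * y ^ 2 := by
    filter_upwards [((Continuous.prodMk_right c).tendsto 0).eventually hgraph] with y hy
    simp only [Φ, g, parabolicCatenoidFun, Function.comp_apply] at hy ⊢
    linarith
  have hg' : deriv g 0 = 0 := by
    simp [deriv_eq_div_of_comp_eventuallyEq hΦ'_ne (hg.differentiableAt two_ne_zero) hsep]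
  have hg'' : iteratedDeriv 2 g 0 = -24 / (24 * c) := by
    rw [iteratedDeriv_two_eq_div_of_comp_eventuallyEq hΦ.contDiffAt hΦ'_ne hg hsep hg', hΦ',
      iteratedDeriv_const_mul_field, iteratedDeriv_fun_pow_zero]
    norm_num
  constructor
  · rw [← (hasDerivAt_pd2 (hτ.differentiableAt two_ne_zero)).deriv, hg']
  · rw [pd2_pd2_eq_iteratedDeriv_two hτ, hg'']
    field_simp

end parabolicCatenoidFun

theorem stmt14_general (c : ℝ) (hc : c ≠ 0) (s : ℝ)
    (F : ℝ → ℝ → ℝ → ℝ)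
    (hF : F = fun t x y => 12 * (x ^ 2 - t ^ 2) - s * (x + t) ^ 4 + 12 * y ^ 2) :
    F (-c) c 0 = 0 ∧
    deriv (fun t => F t c 0) (-c) = 24 * c ∧
    24 * c ≠ 0 ∧
    (∃ W : Set (ℝ × ℝ), IsOpen W ∧ (c, 0) ∈ W ∧
      ∃ τ : ℝ × ℝ → ℝ, ContDiffOn ℝ (⊤ : ℕ∞) τ W ∧ τ (c, 0) = -c ∧
        ∀ q ∈ W, F (τ q) q.1 q.2 = 0) ∧
    (∀ (W' : Set (ℝ × ℝ)) (τ : ℝ × ℝ → ℝ), IsOpen W' → (c, 0) ∈ W' →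
      ContDiffOn ℝ 2 τ W' → τ (c, 0) = -c → (∀ q ∈ W', F (τ q) q.1 q.2 = 0) →
      pd2 τ (c, 0) = 0 ∧ pd2 (pd2 τ) (c, 0) = -1 / c) := by
  obtain rfl : F = parabolicCatenoidFun s := hF
  refine ⟨parabolicCatenoidFun.apply_neg_self_zero s c,
    parabolicCatenoidFun.deriv_time_neg_self s c, mul_ne_zero (by norm_num) hc, ?_, ?_⟩
  · obtain ⟨W, hW, hcW, τ, hτ, hτc, hgraph⟩ := parabolicCatenoidFun.exists_contDiffOn_graph s hc
    exact ⟨W, hW, hcW, τ, hτ.of_le le_top, hτc, hgraph⟩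
  · intro W τ hW hcW hτ hτc hgraph
    have hW_nhds : W ∈ 𝓝 (c, 0) := hW.mem_nhds hcW
    exact parabolicCatenoidFun.pd2_eq_zero_and_pd2_pd2_eq s hc (hτ.contDiffAt hW_nhds) hτc
      (eventually_of_mem hW_nhds hgraph)

/-- for F(t,x,y) = 12(x²−t²) − s(x+t)⁴ + 12y² (s = ±1), one has
    F(−c,c,0) = 0, ∂F/∂t(−c,c,0) = 24c ≠ 0, so there is a local smooth graph
    t = τ(x,y) of the zero set through (−c,c,0); and any such C² graph function τ
    satisfies τ_y(c,0) = 0 and τ_yy(c,0) = −1/c. -/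
theorem stmt14 (c : ℝ) (hc : c ≠ 0) (s : ℝ) (hs : s = 1 ∨ s = -1)
    (F : ℝ → ℝ → ℝ → ℝ)
    (hF : F = fun t x y => 12 * (x ^ 2 - t ^ 2) - s * (x + t) ^ 4 + 12 * y ^ 2) :
    F (-c) c 0 = 0 ∧
    deriv (fun t => F t c 0) (-c) = 24 * c ∧
    24 * c ≠ 0 ∧
    (∃ W : Set (ℝ × ℝ), IsOpen W ∧ (c, 0) ∈ W ∧
      ∃ τ : ℝ × ℝ → ℝ, ContDiffOn ℝ (⊤ : ℕ∞) τ W ∧ τ (c, 0) = -c ∧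
        ∀ q ∈ W, F (τ q) q.1 q.2 = 0) ∧
    (∀ (W' : Set (ℝ × ℝ)) (τ : ℝ × ℝ → ℝ), IsOpen W' → (c, 0) ∈ W' →
      ContDiffOn ℝ 2 τ W' → τ (c, 0) = -c → (∀ q ∈ W', F (τ q) q.1 q.2 = 0) →
      pd2 τ (c, 0) = 0 ∧ pd2 (pd2 τ) (c, 0) = -1 / c) := by
  exact stmt14_general c hc s F hF
end
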